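/- Let d ≥ 1, let α = (α_1,…,α_d) with each α_i > −1 and β > −1, let u be the Appell moment functional ⟨u, f⟩ = ∫_{T_d} f(x) x_1^{α_1}⋯x_d^{α_d} (1−|x|)^β dx on the d-simplex, let λ ≥ 0, and define the Appell-type moment functional v = u + λ δ_0, ⟨v, f⟩ = ⟨u, f⟩ + λ f(0). Let Φ be the symmetric d×d polynomial matrix with entries φ_ii = x_i(x_i − 1) and φ_ij = x_i x_j for i ≠ j, and Ψ the d×1 polynomial vector with entries ψ_i = (|α| + β + d + 1) x_i − (α_i + 1). Then for every i ∈ {1,…,d}, v satisfies the matrix Pearson equation div((x_i Φ) v) = (Φe_i + x_i Ψ)^t v, i.e., ⟨v, x_i Φ ∇f + (Φe_i + x_i Ψ) f⟩ = 0 for every polynomial f, where Φe_i is the i-th column of Φ. Here deg(x_i Φ) = 3 and deg(Φe_i + x_i Ψ) = 2, so v satisfies a Pearson-type equation with s = max{3−2, 2−1} = 1. -/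

import Mathlib

open MvPolynomial Matrix Finset MeasureTheory

noncomputable section

/-- Real polynomials in `d` variables. -/
abbrev MPoly (d : ℕ) := MvPolynomial (Fin d) ℝ

/-- A moment functional: a linear functional on `MPoly d`. -/
abbrev MomF (d : ℕ) := MPoly d →ₗ[ℝ] ℝ

/-- `r_n = binom(n + d - 1, n)`, the dimension of the space of homogeneous
polynomials of degree `n` in `d` variables. -/
def rdim (d n : ℕ) : ℕ := (n + d - 1).choose n

/-- Entrywise application of a moment functional to a polynomial matrix. -/
def mApply {d : ℕ} (u : MomF d) {m n : Type*} (M : Matrix m n (MPoly d)) : Matrix m n ℝ :=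
  Matrix.of fun i j => u (M i j)

/-- The matrix Pearson equation `div(Φ u) = Ψᵗ u`, i.e. `⟨u, Φ ∇f + Ψ f⟩ = 0`
for every polynomial `f` (a system of `d` scalar equations). -/
def Pearson {d : ℕ} (u : MomF d) (Φ : Matrix (Fin d) (Fin d) (MPoly d))
    (Ψ : Fin d → MPoly d) : Prop :=
  ∀ f : MPoly d, ∀ i : Fin d, u (∑ j, Φ i j * pderiv j f + Ψ i * f) = 0

/-- Degree of a polynomial matrix: max of total degrees of the entries. -/
def matDeg {d : ℕ} {m n : Type*} [Fintype m] [Fintype n]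
    (M : Matrix m n (MPoly d)) : ℕ :=
  Finset.univ.sup fun p : m × n => (M p.1 p.2).totalDegree

/-- Degree of a polynomial (column) vector. -/
def vecDeg {d : ℕ} {m : Type*} [Fintype m] (v : m → MPoly d) : ℕ :=
  Finset.univ.sup fun i => (v i).totalDegree

/-- The Jacobian `∇ℙᵗ`: the `d × m` matrix with `(i,k)` entry `∂ᵢ P k`. -/
def gradT {d m : ℕ} (P : Fin m → MPoly d) : Matrix (Fin d) (Fin m) (MPoly d) :=
  Matrix.of fun i k => pderiv i (P k)

/-- The Kronecker product `I_d ⊗ ℙᵗ`: the block-diagonal `d × (d·m)` matrix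
whose `d` diagonal blocks equal the row vector `ℙᵗ`. -/
def kronIdRow {d m : ℕ} (P : Fin m → MPoly d) :
    Matrix (Fin d) (Fin d × Fin m) (MPoly d) :=
  Matrix.of fun i jk => if i = jk.1 then P jk.2 else 0

/-- A constant real matrix viewed as a polynomial matrix. -/
def cmap {d : ℕ} {m n : Type*} (F : Matrix m n ℝ) : Matrix m n (MPoly d) :=
  F.map MvPolynomial.C

/-- `{ℙ_n}` is a weak orthogonal polynomial system with respect to `u`:
each entry of `ℙ_n` has total degree `n`, the entries of `ℙ_0, …, ℙ_n` form a
basis of the polynomials of total degree at most `n` (spanning + linear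
independence), `⟨u, ℙ_n ℙ_mᵗ⟩ = 0` for `n ≠ m`, and `H_n = ⟨u, ℙ_n ℙ_nᵗ⟩` is
nonsingular. -/
structure IsWOPS {d : ℕ} (u : MomF d) (P : (n : ℕ) → Fin (rdim d n) → MPoly d) : Prop where
  deg : ∀ n k, (P n k).totalDegree = n
  span : ∀ n : ℕ, MvPolynomial.restrictTotalDegree (Fin d) ℝ n ≤
    Submodule.span ℝ {g | ∃ m ≤ n, ∃ k, P m k = g}
  indep : LinearIndependent ℝ (fun p : (n : ℕ) × Fin (rdim d n) => P p.1 p.2)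
  orth : ∀ m n, m ≠ n → ∀ j k, u (P m j * P n k) = 0
  Hdet : ∀ n, (Matrix.of fun j k : Fin (rdim d n) => u (P n j * P n k)).det ≠ 0

/-- The matrix `H_n = ⟨u, ℙ_n ℙ_nᵗ⟩`. -/
def Hmat {d : ℕ} (u : MomF d) (P : (n : ℕ) → Fin (rdim d n) → MPoly d) (n : ℕ) :
    Matrix (Fin (rdim d n)) (Fin (rdim d n)) ℝ :=
  Matrix.of fun j k => u (P n j * P n k)

/-- The second-order differential operator
`L[f] = Σ_{i,j} φ_ij ∂²f/∂xᵢ∂xⱼ + Σ_i ψ_i ∂f/∂xᵢ` associated with `Φ`, `Ψ`. -/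
def Lop {d : ℕ} (Φ : Matrix (Fin d) (Fin d) (MPoly d)) (Ψ : Fin d → MPoly d)
    (f : MPoly d) : MPoly d :=
  (∑ i, ∑ j, Φ i j * pderiv i (pderiv j f)) + ∑ i, Ψ i * pderiv i f

/-- The `d`-simplex `T_d = {x : xᵢ ≥ 0, 1 − |x| ≥ 0}`. -/
def simplexSet (d : ℕ) : Set (Fin d → ℝ) :=
  {x | (∀ i, 0 ≤ x i) ∧ ∑ i, x i ≤ 1}

/-- The Appell weight `x^α (1 − |x|)^β` (real powers). -/
def appellWeight {d : ℕ} (α : Fin d → ℝ) (β : ℝ) (x : Fin d → ℝ) : ℝ :=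
  (∏ i, x i ^ α i) * (1 - ∑ i, x i) ^ β

/-- The Appell moment functional `⟨u, f⟩ = ∫_{T_d} f(x) x^α (1 − |x|)^β dx`. -/
def appellInt {d : ℕ} (α : Fin d → ℝ) (β : ℝ) (f : MPoly d) : ℝ :=
  ∫ x in simplexSet d, MvPolynomial.eval x f * appellWeight α β x

open Set in
lemma beta_lint_one {a b : ℝ} (ha : -1 < a) (hb : -1 < b) :
    ∫⁻ t in Ioo (0:ℝ) 1, ENNReal.ofReal (t ^ a * (1 - t) ^ b) =
      ENNReal.ofReal (ProbabilityTheory.beta (a + 1) (b + 1)) := by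
  have h := ProbabilityTheory.lintegral_betaPDF_eq_one (α := a + 1) (β := b + 1)
    (by linarith) (by linarith)
  have hB := ProbabilityTheory.beta_pos (α := a + 1) (β := b + 1) (by linarith) (by linarith)
  rw [ProbabilityTheory.lintegral_betaPDF] at h
  simp only [add_sub_cancel_right] at h
  have e : ∀ t : ℝ, ENNReal.ofReal (t ^ a * (1 - t) ^ b) =
      ENNReal.ofReal (ProbabilityTheory.beta (a + 1) (b + 1)) *
      ENNReal.ofReal (1 / ProbabilityTheory.beta (a + 1) (b + 1) * t ^ a * (1 - t) ^ b) := by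
    intro t
    rw [← ENNReal.ofReal_mul hB.le]
    congr 1
    field_simp
  simp_rw [e]
  rw [lintegral_const_mul _ (by fun_prop), h, mul_one]

open Set in
lemma beta_lint {a b s : ℝ} (ha : -1 < a) (hb : -1 < b) (hs : 0 < s) :
    ∫⁻ t in Ioo (0:ℝ) s, ENNReal.ofReal (t ^ a * (s - t) ^ b) =
      ENNReal.ofReal (ProbabilityTheory.beta (a + 1) (b + 1) * s ^ (a + b + 1)) := by
  have him : (fun t : ℝ => s * t) '' Ioo 0 1 = Ioo 0 s := by
    rw [Set.image_mul_left_Ioo hs]; simp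
  rw [← him, lintegral_image_eq_lintegral_abs_deriv_mul (f' := fun _ => s) measurableSet_Ioo
    (fun x _ => by simpa using ((hasDerivAt_id x).const_mul s).hasDerivWithinAt)
    ((mul_right_injective₀ hs.ne').injOn)]
  have : ∀ t ∈ Ioo (0:ℝ) 1, ENNReal.ofReal |s| *
      ENNReal.ofReal ((s * t) ^ a * (s - s * t) ^ b) =
      ENNReal.ofReal (s ^ (a + b + 1)) * ENNReal.ofReal (t ^ a * (1 - t) ^ b) := by
    intro t ht
    rw [← ENNReal.ofReal_mul (abs_nonneg _), ← ENNReal.ofReal_mul (by positivity), abs_of_pos hs,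
      show s - s * t = s * (1 - t) by ring, Real.mul_rpow hs.le ht.1.le,
      Real.mul_rpow hs.le (by linarith [ht.2]), Real.rpow_add hs, Real.rpow_add hs, Real.rpow_one]
    congr 1; ring
  rw [setLIntegral_congr_fun measurableSet_Ioo this, lintegral_const_mul _ (by fun_prop),
    beta_lint_one ha hb, ← ENNReal.ofReal_mul (by positivity), mul_comm]

def openSimplex (d : ℕ) : Set (Fin d → ℝ) := {x | (∀ i, 0 < x i) ∧ ∑ i, x i < 1}

lemma measurableSet_openSimplex (d : ℕ) : MeasurableSet (openSimplex d) := by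
  have : openSimplex d = (⋂ i, {x : Fin d → ℝ | 0 < x i}) ∩ {x | ∑ i, x i < 1} := by
    ext x; simp [openSimplex]
  rw [this]
  refine (MeasurableSet.iInter fun i => ?_).inter ?_
  · exact measurableSet_lt measurable_const (measurable_pi_apply i)
  · exact measurableSet_lt (by fun_prop) measurable_const

lemma measurable_appellWeight {d : ℕ} (α : Fin d → ℝ) (β : ℝ) :
    Measurable (appellWeight α β) := by
  unfold appellWeight; fun_prop

lemma dirichlet_lint : ∀ (d : ℕ) (α : Fin d → ℝ) (_ : ∀ i, -1 < α i) (β : ℝ) (_ : -1 < β),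
    ∫⁻ x in openSimplex d, ENNReal.ofReal (appellWeight α β x) =
      ENNReal.ofReal ((∏ i, Real.Gamma (α i + 1)) * Real.Gamma (β + 1) /
        Real.Gamma ((∑ i, α i) + β + d + 1)) := by
  intro d
  induction d with
  | zero =>
    intro α hα β hβ
    have h1 : openSimplex 0 = Set.univ := by
      ext x; simp [openSimplex]
    have hg := (Real.Gamma_pos_of_pos (s := β + 1) (by linarith)).ne'
    rw [h1]
    simp [appellWeight, hg, lintegral_unique, volume_pi]
  | succ n ih =>
    intro α hα β hβ
    have h0 := hα 0
    have hG := Real.Gamma_pos_of_pos (s := α 0 + β + 1 + 1) (by linarith)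
    have hm : Measurable fun x : Fin (n+1) → ℝ => (openSimplex (n+1)).indicator
      (fun x => ENNReal.ofReal (appellWeight α β x)) x :=
      ((measurable_appellWeight α β).ennreal_ofReal).indicator (measurableSet_openSimplex _)
    have e := (volume_preserving_piFinSuccAbove (fun _ : Fin (n + 1) => ℝ) 0).symm
    rw [← lintegral_indicator (measurableSet_openSimplex _),
      ← e.lintegral_comp hm]
    have hm2 := hm.comp (MeasurableEquiv.piFinSuccAbove (fun _ : Fin (n + 1) => ℝ) 0).symm.measurable
    rw [Measure.volume_eq_prod, lintegral_prod_symm' _ (by exact hm2)]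
    have key : ∀ y : Fin n → ℝ, ∫⁻ t : ℝ, (openSimplex (n+1)).indicator
        (fun x => ENNReal.ofReal (appellWeight α β x))
        ((MeasurableEquiv.piFinSuccAbove (fun _ : Fin (n + 1) => ℝ) 0).symm (t, y)) =
        (openSimplex n).indicator (fun y =>
          ENNReal.ofReal (ProbabilityTheory.beta (α 0 + 1) (β + 1)) *
          ENNReal.ofReal (appellWeight (fun i => α i.succ) (α 0 + β + 1) y)) y := by
      intro y
      have e1 : ∀ t : ℝ, (MeasurableEquiv.piFinSuccAbove (fun _ : Fin (n + 1) => ℝ) 0).symm (t, y)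
          = (Fin.cons t y : Fin (n+1) → ℝ) := by
        intro t
        simp [MeasurableEquiv.piFinSuccAbove, Fin.insertNthEquiv]
      simp_rw [e1]
      by_cases hy : y ∈ openSimplex n
      · rw [Set.indicator_of_mem hy]
        have hp : 0 < 1 - ∑ i, y i := by linarith [hy.2]
        have hP : 0 ≤ ∏ i, y i ^ α i.succ :=
          Finset.prod_nonneg fun i _ => Real.rpow_nonneg (hy.1 i).le _
        have e2 : ∀ t : ℝ, (openSimplex (n+1)).indicator
            (fun x => ENNReal.ofReal (appellWeight α β x)) (Fin.cons t y : Fin (n+1) → ℝ) =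
            (Set.Ioo 0 (1 - ∑ i, y i)).indicator (fun t =>
              ENNReal.ofReal (∏ i, y i ^ α i.succ) *
              ENNReal.ofReal (t ^ α 0 * ((1 - ∑ i, y i) - t) ^ β)) t := by
          intro t
          by_cases ht : t ∈ Set.Ioo 0 (1 - ∑ i, y i)
          · rw [Set.indicator_of_mem ht, Set.indicator_of_mem, ← ENNReal.ofReal_mul hP]
            · congr 1
              simp only [appellWeight, Fin.prod_univ_succ, Fin.sum_univ_succ, Fin.cons_zero,
                Fin.cons_succ]
              rw [show 1 - (t + ∑ i, y i) = 1 - ∑ i, y i - t by ring]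
              ring
            · refine ⟨Fin.cases (by simpa using ht.1) (by simpa using hy.1), ?_⟩
              simp only [Fin.sum_univ_succ, Fin.cons_zero, Fin.cons_succ]
              linarith [ht.2]
          · rw [Set.indicator_of_notMem ht, Set.indicator_of_notMem]
            intro h
            apply ht
            refine ⟨by simpa using h.1 0, ?_⟩
            have := h.2
            simp only [Fin.sum_univ_succ, Fin.cons_zero, Fin.cons_succ] at this
            linarith
        simp_rw [e2]
        rw [lintegral_indicator measurableSet_Ioo, lintegral_const_mul _ (by fun_prop),
          beta_lint h0 hβ hp, ← ENNReal.ofReal_mul hP, ← ENNReal.ofReal_mul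
          (ProbabilityTheory.beta_pos (by linarith) (by linarith)).le]
        congr 1
        unfold appellWeight
        ring
      · rw [Set.indicator_of_notMem hy]
        refine (lintegral_congr fun t => ?_).trans lintegral_zero
        apply Set.indicator_of_notMem
        intro h
        apply hy
        have h2 := h.2
        have h1 : 0 < t := by simpa using h.1 0
        simp only [Fin.sum_univ_succ, Fin.cons_zero, Fin.cons_succ] at h2
        exact ⟨fun i => by simpa using h.1 i.succ, by linarith⟩
    simp only [Function.comp_def] at *
    simp_rw [key]
    rw [lintegral_indicator (measurableSet_openSimplex _),
      lintegral_const_mul _ (measurable_appellWeight _ _).ennreal_ofReal,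
      ih _ (fun i => hα _) _ (by linarith),
      ← ENNReal.ofReal_mul (ProbabilityTheory.beta_pos (by linarith) (by linarith)).le]
    congr 1
    rw [ProbabilityTheory.beta, Fin.prod_univ_succ, Fin.sum_univ_succ,
      show α 0 + 1 + (β + 1) = α 0 + β + 1 + 1 by ring]
    rw [show α 0 + ∑ i : Fin n, α i.succ + β + ((n+1 : ℕ):ℝ) + 1
      = ∑ i : Fin n, α i.succ + (α 0 + β + 1) + n + 1 by push_cast; ring]
    field_simp

lemma simplex_ae_eq (d : ℕ) : simplexSet d =ᵐ[volume] openSimplex d := by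
  have hsub : openSimplex d ⊆ simplexSet d := fun x hx => ⟨fun i => (hx.1 i).le, hx.2.le⟩
  let A : AffineSubspace ℝ (Fin d → ℝ) :=
    { carrier := {x | ∑ i, x i = 1}
      smul_vsub_vadd_mem' := by
        intro c p q r hp hq hr
        simp only [Set.mem_ofPred_eq] at *
        simp [Finset.sum_add_distrib, ← Finset.mul_sum, hp, hq, hr] }
  have hA : volume (A : Set (Fin d → ℝ)) = 0 := by
    apply Measure.addHaar_affineSubspace
    intro h
    have : (0 : Fin d → ℝ) ∈ A := by rw [h]; trivial
    have : ∑ i, (0 : Fin d → ℝ) i = 1 := this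
    simp at this
  have hB : ∀ i : Fin d, volume {x : Fin d → ℝ | x i = 0} = 0 := by
    intro i
    have := Measure.addHaar_submodule (volume : Measure (Fin d → ℝ))
      (LinearMap.ker (LinearMap.proj i : (Fin d → ℝ) →ₗ[ℝ] ℝ)) (by
        intro h
        have : (fun _ => 1 : Fin d → ℝ) ∈ LinearMap.ker (LinearMap.proj i : (Fin d → ℝ) →ₗ[ℝ] ℝ) := by
          rw [h]; trivial
        simp at this)
    exact this
  have hA' : ∀ᵐ x : Fin d → ℝ, ∑ i, x i ≠ 1 := by
    rw [ae_iff]; simp only [ne_eq, not_not]; exact hA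
  have hB' : ∀ᵐ x : Fin d → ℝ, ∀ i, x i ≠ 0 := by
    rw [ae_all_iff]; intro i
    rw [ae_iff]; simpa using hB i
  filter_upwards [hA', hB'] with x h1 h2
  apply propext
  constructor
  · intro h
    exact ⟨fun i => lt_of_le_of_ne (h.1 i) (h2 i).symm, lt_of_le_of_ne h.2 h1⟩
  · intro h; exact hsub h

lemma weight_nonneg {d : ℕ} (α : Fin d → ℝ) (β : ℝ) (x) (hx : x ∈ openSimplex d) :
    0 ≤ appellWeight α β x :=
  mul_nonneg (Finset.prod_nonneg fun i _ => Real.rpow_nonneg (hx.1 i).le _)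
    (Real.rpow_nonneg (by linarith [hx.2]) _)

lemma dirichlet {d : ℕ} (α : Fin d → ℝ) (hα : ∀ i, -1 < α i) (β : ℝ) (hβ : -1 < β) :
    IntegrableOn (appellWeight α β) (openSimplex d) ∧
    ∫ x in openSimplex d, appellWeight α β x = ((∏ i, Real.Gamma (α i + 1)) * Real.Gamma (β + 1) /
        Real.Gamma ((∑ i, α i) + β + d + 1)) := by
  have h := dirichlet_lint d α hα β hβ
  have hnn : 0 ≤ᵐ[volume.restrict (openSimplex d)] appellWeight α β :=
    ae_restrict_of_forall_mem (measurableSet_openSimplex d) (weight_nonneg α β)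
  have hsum : -(d:ℝ) ≤ ∑ i, α i := by
    have := Finset.sum_le_sum (s := univ) (fun i _ => (hα i).le)
    simpa using this
  constructor
  · refine ⟨(measurable_appellWeight α β).aestronglyMeasurable, ?_⟩
    rw [hasFiniteIntegral_iff_ofReal hnn, h]
    exact ENNReal.ofReal_lt_top
  · rw [integral_eq_lintegral_of_nonneg_ae hnn (measurable_appellWeight α β).aestronglyMeasurable,
      h, ENNReal.toReal_ofReal]
    apply div_nonneg
    · exact mul_nonneg (Finset.prod_nonneg fun i _ =>
        (Real.Gamma_pos_of_pos (by linarith [hα i])).le) (Real.Gamma_pos_of_pos (by linarith)).le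
    · exact (Real.Gamma_pos_of_pos (by linarith)).le

lemma appellInt_eq {d : ℕ} (α : Fin d → ℝ) (β : ℝ) (f : MPoly d) :
    appellInt α β f = ∫ x in openSimplex d, MvPolynomial.eval x f * appellWeight α β x :=
  setIntegral_congr_set (simplex_ae_eq d)

lemma eval_monomial_weight {d : ℕ} (α : Fin d → ℝ) (β : ℝ) (n : Fin d →₀ ℕ) (c : ℝ)
    (x : Fin d → ℝ) (hx : x ∈ openSimplex d) :
    MvPolynomial.eval x (monomial n c) * appellWeight α β x =
      c * appellWeight (fun i => α i + n i) β x := by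
  rw [eval_monomial, Finsupp.prod_fintype _ _ (by simp)]
  unfold appellWeight
  have : ∏ i, x i ^ (α i + (n i : ℝ)) = (∏ i, x i ^ n i) * ∏ i, x i ^ α i := by
    rw [← Finset.prod_mul_distrib]
    refine Finset.prod_congr rfl fun i _ => ?_
    rw [Real.rpow_add_natCast (hx.1 i).ne', mul_comm]
  rw [this]; ring

lemma shift_gt {d : ℕ} {α : Fin d → ℝ} (hα : ∀ i, -1 < α i) (n : Fin d →₀ ℕ) (i : Fin d) :
    -1 < α i + n i := by
  have := hα i
  have : (0:ℝ) ≤ n i := Nat.cast_nonneg _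
  linarith

lemma integrable_poly {d : ℕ} (α : Fin d → ℝ) (hα : ∀ i, -1 < α i) (β : ℝ) (hβ : -1 < β)
    (f : MPoly d) :
    IntegrableOn (fun x => MvPolynomial.eval x f * appellWeight α β x) (openSimplex d) := by
  induction f using MvPolynomial.induction_on' with
  | monomial n c =>
    rw [integrableOn_congr_fun (fun x hx => eval_monomial_weight α β n c x hx)
      (measurableSet_openSimplex d)]
    exact (dirichlet _ (shift_gt hα n) β hβ).1.const_mul c
  | add p q hp hq =>
    simp only [map_add, add_mul]
    exact hp.add hq

lemma appellInt_monomial {d : ℕ} (α : Fin d → ℝ) (hα : ∀ i, -1 < α i) (β : ℝ) (hβ : -1 < β)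
    (n : Fin d →₀ ℕ) (c : ℝ) :
    appellInt α β (monomial n c) =
      c * ((∏ i, Real.Gamma (α i + n i + 1)) * Real.Gamma (β + 1) /
        Real.Gamma ((∑ i, (α i + n i)) + β + d + 1)) := by
  rw [appellInt_eq, setIntegral_congr_fun (measurableSet_openSimplex d)
    (fun x hx => eval_monomial_weight α β n c x hx), integral_const_mul,
    (dirichlet _ (shift_gt hα n) β hβ).2]

lemma appellInt_add {d : ℕ} (α : Fin d → ℝ) (hα : ∀ i, -1 < α i) (β : ℝ) (hβ : -1 < β)
    (f g : MPoly d) : appellInt α β (f + g) = appellInt α β f + appellInt α β g := by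
  simp only [appellInt_eq]
  rw [← integral_add (integrable_poly α hα β hβ f) (integrable_poly α hα β hβ g)]
  simp [add_mul]

lemma appellInt_sub {d : ℕ} (α : Fin d → ℝ) (hα : ∀ i, -1 < α i) (β : ℝ) (hβ : -1 < β)
    (f g : MPoly d) : appellInt α β (f - g) = appellInt α β f - appellInt α β g := by
  have := appellInt_add α hα β hβ (f - g) g
  rw [sub_add_cancel] at this
  linarith

lemma moment_rec {d : ℕ} (α : Fin d → ℝ) (hα : ∀ i, -1 < α i) (β : ℝ) (hβ : -1 < β)
    (n : Fin d →₀ ℕ) (a : Fin d) (c : ℝ) :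
    appellInt α β (monomial (n + Finsupp.single a 1) (((∑ i, (α i + n i)) + β + d + 1) * c)) =
      appellInt α β (monomial n ((α a + n a + 1) * c)) := by
  rw [appellInt_monomial α hα β hβ, appellInt_monomial α hα β hβ]
  have hsum : -(d:ℝ) ≤ ∑ i, (α i + n i) := by
    have := Finset.sum_le_sum (s := univ) (fun i _ => (shift_gt hα n i).le)
    simpa using this
  have hS : 0 < (∑ i, (α i + n i)) + β + d + 1 := by linarith
  have e1 : ∑ i, (α i + ((n + Finsupp.single a 1 : Fin d →₀ ℕ) i : ℝ)) =
      ∑ i, (α i + n i) + 1 := by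
    have : ∑ i, ((Finsupp.single a 1 : Fin d →₀ ℕ) i : ℝ) = 1 := by
      simp [Finsupp.single_apply]
    simp only [Finsupp.add_apply, Nat.cast_add, Finset.sum_add_distrib, this]
    ring
  have e2 : ∏ i, Real.Gamma (α i + ((n + Finsupp.single a 1 : Fin d →₀ ℕ) i : ℝ) + 1) =
      (α a + n a + 1) * ∏ i, Real.Gamma (α i + n i + 1) := by
    rw [← Finset.mul_prod_erase _ _ (Finset.mem_univ a),
      ← Finset.mul_prod_erase _ (fun i => Real.Gamma (α i + n i + 1)) (Finset.mem_univ a)]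
    have h1 : ∀ i ∈ univ.erase a, Real.Gamma (α i + ((n + Finsupp.single a 1 : Fin d →₀ ℕ) i : ℝ) + 1)
        = Real.Gamma (α i + n i + 1) := by
      intro i hi
      have : a ≠ i := (Finset.ne_of_mem_erase hi).symm
      simp [Finsupp.single_apply, this]
    rw [Finset.prod_congr rfl h1, ← mul_assoc]
    congr 1
    rw [← Real.Gamma_add_one (by linarith [shift_gt hα n a])]
    simp [add_assoc]
  have e3 : Real.Gamma (∑ i, (α i + n i) + 1 + β + d + 1) =
      (∑ i, (α i + n i) + β + d + 1) * Real.Gamma (∑ i, (α i + n i) + β + d + 1) := by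
    rw [← Real.Gamma_add_one hS.ne']
    congr 1; ring
  have hG := Real.Gamma_pos_of_pos hS
  rw [e1, e2, e3]
  generalize (∑ i, (α i + n i) + β + d + 1 : ℝ) = S at *
  field_simp

lemma Phi_sum {d : ℕ} (g : MPoly d) (a : Fin d) :
    ∑ j, (if a = j then (X a * (X a - 1) : MPoly d) else X a * X j) * pderiv j g =
      X a * (∑ j, X j * pderiv j g) - X a * pderiv a g := by
  have : ∀ j : Fin d, (if a = j then (X a * (X a - 1) : MPoly d) else X a * X j) * pderiv j g =
      X a * (X j * pderiv j g) - if a = j then X a * pderiv j g else 0 := by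
    intro j
    split_ifs with h
    · subst h; ring
    · ring
  rw [Finset.sum_congr rfl fun j _ => this j, Finset.sum_sub_distrib, Finset.mul_sum]
  simp

lemma pearson_base {d : ℕ} (α : Fin d → ℝ) (hα : ∀ i, -1 < α i) (β : ℝ) (hβ : -1 < β)
    (g : MPoly d) (a : Fin d) :
    appellInt α β (X a * (∑ j, X j * pderiv j g) - X a * pderiv a g +
      (C ((∑ k, α k) + β + d + 1) * X a - C (α a + 1)) * g) = 0 := by
  induction g using MvPolynomial.induction_on' with
  | monomial n c =>
    have h : ∀ j, X j * pderiv j (monomial n c) = C (n j : ℝ) * monomial n c := by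
      intro j
      rw [X_mul_pderiv_monomial, nsmul_eq_mul]
      simp
    have e : X a * (∑ j, X j * pderiv j (monomial n c)) - X a * pderiv a (monomial n c) +
      (C ((∑ k, α k) + β + d + 1) * X a - C (α a + 1)) * (monomial n c) =
      monomial (n + Finsupp.single a 1) (((∑ i, (α i + n i)) + β + d + 1) * c) -
      monomial n ((α a + n a + 1) * c) := by
      simp only [h]
      rw [← Finset.sum_mul, ← map_sum]
      have e4 : monomial (n + Finsupp.single a 1) (((∑ i, (α i + n i)) + β + d + 1) * c) =
          C ((∑ i, (α i + n i)) + β + d + 1) * (monomial n c * X a) := by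
        rw [X, monomial_mul, mul_one, C_mul_monomial]
      rw [e4, ← C_mul_monomial]
      simp only [Finset.sum_add_distrib, map_add]
      ring
    rw [e, appellInt_sub α hα β hβ, moment_rec α hα β hβ, sub_self]
  | add p q hp hq =>
    rw [← add_zero (0:ℝ)]
    nth_rewrite 1 [← hp]
    rw [← hq, ← appellInt_add α hα β hβ]
    congr 1
    simp only [map_add, mul_add, Finset.sum_add_distrib]
    ring

lemma totalDegree_X_sub_C' {d : ℕ} (c : ℝ) (i : Fin d) :
    ((C c : MPoly d) * X i).totalDegree ≤ 1 := by
  refine (totalDegree_mul _ _).trans ?_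
  simp

lemma totalDegree_X_sub_one {d : ℕ} (i : Fin d) :
    (X i - 1 : MPoly d).totalDegree = 1 := by
  rw [sub_eq_add_neg, totalDegree_add_eq_left_of_totalDegree_lt] <;> simp [totalDegree_neg]

/-- **Appell-type polynomials are semiclassical with `s = 1`.**
The Appell-type functional `v = u + λ δ₀` satisfies, for each `i`, the matrix
Pearson equation `div((xᵢΦ) v) = (Φeᵢ + xᵢΨ)ᵗ v`, where `Φ`, `Ψ` are the Appell
Pearson data; moreover `deg(xᵢΦ) = 3` and `deg(Φeᵢ + xᵢΨ) = 2`, so `v`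
satisfies a Pearson-type equation with `s = max{3−2, 2−1} = 1`. -/
theorem appell_type_is_semiclassical
    {d : ℕ} (hd : 1 ≤ d)
    (α : Fin d → ℝ) (hα : ∀ i, -1 < α i) (β : ℝ) (hβ : -1 < β)
    (lam : ℝ) (hlam : 0 ≤ lam)
    (Φ : Matrix (Fin d) (Fin d) (MPoly d))
    (hΦ : Φ = Matrix.of fun i j => if i = j then
      MvPolynomial.X i * (MvPolynomial.X i - 1) else MvPolynomial.X i * MvPolynomial.X j)
    (Ψ : Fin d → MPoly d)
    (hΨ : Ψ = fun i => MvPolynomial.C ((∑ k, α k) + β + d + 1) * MvPolynomial.X i -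
      MvPolynomial.C (α i + 1)) :
    ∀ i : Fin d,
      (∀ (f : MPoly d) (a : Fin d),
        appellInt α β
            (∑ j, (MvPolynomial.X i * Φ a j) * pderiv j f +
              (Φ a i + MvPolynomial.X i * Ψ a) * f) +
          lam * MvPolynomial.eval (fun _ => (0 : ℝ))
            (∑ j, (MvPolynomial.X i * Φ a j) * pderiv j f +
              (Φ a i + MvPolynomial.X i * Ψ a) * f) = 0) ∧
      matDeg (Matrix.of fun a b => MvPolynomial.X i * Φ a b) = 3 ∧
      vecDeg (fun a => Φ a i + MvPolynomial.X i * Ψ a) = 2 := by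
  subst hΦ hΨ
  intro i
  simp only [Matrix.of_apply]
  refine ⟨?_, ?_, ?_⟩
  · intro f a
    have hev : MvPolynomial.eval (fun _ => (0 : ℝ))
            (∑ j, (X i * (if a = j then X a * (X a - 1) else X a * X j)) * pderiv j f +
              ((if a = i then X a * (X a - 1) else X a * X i) +
                X i * (C ((∑ k, α k) + β + d + 1) * X a - C (α a + 1))) * f) = 0 := by
      simp only [map_add, map_mul, map_sum, eval_X, zero_mul, Finset.sum_const_zero, zero_add]
      split_ifs <;> simp
    rw [hev, mul_zero, add_zero, ← pearson_base α hα β hβ (X i * f) a, ← Phi_sum]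
    congr 1
    simp only [Derivation.leibniz, smul_eq_mul, mul_add, Finset.sum_add_distrib, pderiv_X]
    have : ∑ j, (if a = j then (X a * (X a - 1) : MPoly d) else X a * X j) *
        (f * (Pi.single j 1 : Fin d → MPoly d) i) =
        (if a = i then (X a * (X a - 1) : MPoly d) else X a * X i) * f := by
      rw [Finset.sum_eq_single i]
      · simp
      · intro j _ hj; simp [Pi.single_apply, hj.symm]
      · simp
    rw [this]
    have h2 : ∀ j, (X i * (if a = j then (X a * (X a - 1) : MPoly d) else X a * X j)) * pderiv j f =
      (if a = j then (X a * (X a - 1) : MPoly d) else X a * X j) * (X i * pderiv j f) := by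
      intro j; ring
    rw [Finset.sum_congr rfl fun j _ => h2 j]
    ring
  · unfold matDeg
    apply le_antisymm
    · refine Finset.sup_le fun p _ => ?_
      simp only [Matrix.of_apply]
      refine (totalDegree_mul _ _).trans ?_
      have : (if p.1 = p.2 then (X p.1 * (X p.1 - 1) : MPoly d)
          else X p.1 * X p.2).totalDegree ≤ 2 := by
        split_ifs
        · refine (totalDegree_mul _ _).trans ?_
          rw [totalDegree_X_sub_one, totalDegree_X]
        · refine (totalDegree_mul _ _).trans ?_
          rw [totalDegree_X, totalDegree_X]
      rw [totalDegree_X]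
      omega
    · refine le_trans ?_ (Finset.le_sup (Finset.mem_univ (i, i)))
      simp only [Matrix.of_apply, if_true]
      have h1 : (X i - 1 : MPoly d) ≠ 0 := by
        intro h
        have := totalDegree_X_sub_one i
        rw [h] at this; simp at this
      rw [totalDegree_mul_of_isDomain (X_ne_zero i) (mul_ne_zero (X_ne_zero i) h1),
        totalDegree_mul_of_isDomain (X_ne_zero i) h1, totalDegree_X_sub_one, totalDegree_X]
  · unfold vecDeg
    apply le_antisymm
    · refine Finset.sup_le fun a _ => ?_
      refine (totalDegree_add _ _).trans (max_le ?_ ?_)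
      · split_ifs
        · refine (totalDegree_mul _ _).trans ?_
          rw [totalDegree_X_sub_one, totalDegree_X]
        · refine (totalDegree_mul _ _).trans ?_
          rw [totalDegree_X, totalDegree_X]
      · refine (totalDegree_mul _ _).trans ?_
        have : (C ((∑ k, α k) + β + d + 1) * X a - C (α a + 1) : MPoly d).totalDegree ≤ 1 := by
          refine (totalDegree_sub _ _).trans (max_le (totalDegree_X_sub_C' _ _) ?_)
          rw [totalDegree_C]; exact zero_le_one
        rw [totalDegree_X]
        omega
    · refine le_trans ?_ (Finset.le_sup (Finset.mem_univ i))
      simp only [if_true]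
      have hsum : -(d:ℝ) ≤ ∑ i, α i := by
        have := Finset.sum_le_sum (s := univ) (fun i _ => (hα i).le)
        simpa using this
      have e : (X i * (X i - 1) + X i * (C ((∑ k, α k) + β + d + 1) * X i - C (α i + 1)) : MPoly d)
          = monomial (Finsupp.single i 2) ((∑ k, α k) + β + d + 1 + 1) +
            monomial (Finsupp.single i 1) (-(α i + 1 + 1)) := by
        rw [← C_mul_X_pow_eq_monomial, ← C_mul_X_pow_eq_monomial]
        simp only [map_add, map_neg, map_one]
        ring
      rw [e]
      have := le_totalDegree (p := (monomial (Finsupp.single i 2) ((∑ k, α k) + β + d + 1 + 1) +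
            monomial (Finsupp.single i 1) (-(α i + 1 + 1)) : MPoly d)) (s := Finsupp.single i 2) (by
          rw [mem_support_iff, coeff_add, coeff_monomial, coeff_monomial, if_pos rfl, if_neg]
          · intro h; linarith
          · intro h
            have := DFunLike.congr_fun h i
            simp at this)
      simpa using this
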